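/- Sobolev inequality in the weighted variable exponent setting (Proposition 2.6, stated for C¹ functions): let N ≥ 2, let p : ℝ^N → ℝ be continuous with 1 < p⁻ ≤ p(x) ≤ p⁺ < N for all x, satisfying the log-Hölder continuity condition (there is C₁ > 0 with |p(x) − p(y)| · log(1/|x−y|) ≤ C₁ whenever 0 < |x−y| < 1/2) and the log-Hölder decay condition (there are p_∞ ∈ ℝ and C₂ > 0 with |p(x) − p_∞| ≤ C₂/log(e + |x|) for all x). Let b : ℝ^N → ℝ be measurable and essentially bounded with ess inf_{x∈ℝ^N} b(x) > 0. Set p*(x) := N p(x)/(N − p(x)). Then there exists a constant C* > 0 such that for every continuously differentiable function u : ℝ^N → ℝ with ∫_{ℝ^N} (|∇u(x)|^{p(x)} + b(x)|u(x)|^{p(x)}) dx < ∞ one has ‖u‖_{p*(·)} ≤ C* ‖u‖_{b,p}, where ‖u‖_{b,p} := inf{τ > 0 : ∫_{ℝ^N} (|∇u(x)/τ|^{p(x)} + b(x)|u(x)/τ|^{p(x)}) dx ≤ 1}. -/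

import Mathlib

open MeasureTheory

/-- The Luxemburg norm `‖u‖_{p(·)} = inf {τ > 0 : ∫ |u(x)/τ|^{p(x)} dx ≤ 1}`. -/
noncomputable def luxNorm {N : ℕ} (p u : EuclideanSpace ℝ (Fin N) → ℝ) : ℝ :=
  sInf {τ : ℝ | 0 < τ ∧ ∫ x, |u x / τ| ^ (p x) ≤ 1}

/-- The weighted Sobolev norm
`‖u‖_{b,p} = inf {τ > 0 : ∫ (|∇u(x)/τ|^{p(x)} + b(x)|u(x)/τ|^{p(x)}) dx ≤ 1}`. -/
noncomputable def weightedSobolevNorm {N : ℕ}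
    (p b u : EuclideanSpace ℝ (Fin N) → ℝ) : ℝ :=
  sInf {τ : ℝ | 0 < τ ∧
    ∫ x, ((‖gradient u x‖ / τ) ^ (p x) + b x * (|u x| / τ) ^ (p x)) ≤ 1}

open scoped ENNReal NNReal

lemma aux_sobolev {N : ℕ} (hN : 2 ≤ N) (pp : ℝ) (hpp : pp < N) (hpp1 : 1 ≤ pp) :
    ∃ S : ℝ≥0, ∀ q : ℝ, 1 ≤ q → q ≤ pp → ∀ w : EuclideanSpace ℝ (Fin N) → ℝ,
      ContDiff ℝ 1 w → HasCompactSupport w →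
      ∫⁻ x, ‖w x‖ₑ ^ (N * q / (N - q)) ≤
        S * (∫⁻ x, ‖fderiv ℝ w x‖ₑ ^ q) ^ ((N : ℝ) / (N - q)) := by
  have hN' : (2:ℝ) ≤ N := by exact_mod_cast hN
  set A : ℝ≥0 := eLpNormLESNormFDerivOneConst (volume : Measure (EuclideanSpace ℝ (Fin N)))
    (NNReal.conjExponent N) with hA
  set D : ℝ≥0 := max 1 (A * (pp * (N - 1) / (N - pp)).toNNReal) with hD
  refine ⟨D ^ (N * pp / (N - pp)), fun q hq1 hq w hw hwc => ?_⟩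
  have hNq : (0:ℝ) < N - q := by linarith
  have hNpp : (0:ℝ) < N - pp := by linarith
  have hs0 : 0 < N * q / (N - q) := by positivity
  have hfr : Module.finrank ℝ (EuclideanSpace ℝ (Fin N)) = N := by simp
  obtain ⟨Q, hQ⟩ : ∃ Q : ℝ≥0, (Q : ℝ) = q := ⟨q.toNNReal, Real.coe_toNNReal _ (by linarith)⟩
  obtain ⟨R, hR⟩ : ∃ R : ℝ≥0, (R : ℝ) = N * q / (N - q) :=
    ⟨(N * q / (N - q)).toNNReal, Real.coe_toNNReal _ hs0.le⟩
  have key := eLpNorm_le_eLpNorm_fderiv_of_eq_inner (volume : Measure (EuclideanSpace ℝ (Fin N)))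
    hw hwc (p := Q) (p' := R)
    (by rw [← NNReal.coe_le_coe, hQ]; simpa using hq1) (by rw [hfr]; omega)
    (by rw [hfr, hR]; push_cast; rw [hQ]; field_simp)
  have hc : eLpNormLESNormFDerivOfEqInnerConst (volume : Measure (EuclideanSpace ℝ (Fin N))) q ≤ D := by
    unfold eLpNormLESNormFDerivOfEqInnerConst
    simp only [hfr]
    refine le_trans ?_ (le_max_right _ _)
    rw [hA]
    gcongr
    · nlinarith
    · linarith
  rw [eLpNorm_nnreal_eq_lintegral (by rw [← NNReal.coe_ne_zero, hR]; exact hs0.ne'),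
    eLpNorm_nnreal_eq_lintegral (by rw [← NNReal.coe_ne_zero, hQ]; linarith)] at key
  rw [hQ, hR] at key
  have k2 := ENNReal.rpow_le_rpow (key.trans (mul_le_mul_left (ENNReal.coe_le_coe.2 hc) _)) hs0.le
  rw [← ENNReal.rpow_mul, one_div, inv_mul_cancel₀ hs0.ne', ENNReal.rpow_one,
    ENNReal.mul_rpow_of_nonneg _ _ hs0.le, ← ENNReal.rpow_mul] at k2
  have e1 : 1 / q * (N * q / (N - q)) = (N : ℝ) / (N - q) := by field_simp
  rw [e1] at k2
  refine k2.trans ?_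
  gcongr
  rw [← ENNReal.coe_rpow_of_nonneg _ hs0.le]
  refine ENNReal.coe_le_coe.2 ?_
  apply NNReal.rpow_le_rpow_of_exponent_le (le_max_left _ _)
  gcongr

lemma aux_bump {F : Type*} [NormedAddCommGroup F] [InnerProductSpace ℝ F] [FiniteDimensional ℝ F] :
    ∃ (f : F → ℝ) (c : ℝ), 0 < c ∧ ContDiff ℝ 1 f ∧ (∀ x, 0 ≤ f x) ∧ (∀ x, f x ≤ 1) ∧
      (∀ x, ‖x‖ ≤ 1 → f x = 1) ∧ (∀ x, 2 ≤ ‖x‖ → f x = 0) ∧ HasCompactSupport f ∧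
      (∀ x, ‖fderiv ℝ f x‖ ≤ c) ∧ (∀ x, ‖x‖ < 1 → fderiv ℝ f x = 0) ∧
      (∀ x, 2 < ‖x‖ → fderiv ℝ f x = 0) := by
  let f : ContDiffBump (0 : F) := ⟨1, 2, by norm_num, by norm_num⟩
  have hf : ContDiff ℝ 1 f := f.contDiff
  obtain ⟨c, hc⟩ := (hf.continuous_fderiv (by norm_num)).bounded_above_of_compact_support
    (f.hasCompactSupport.fderiv (𝕜 := ℝ))
  refine ⟨f, max c 1, by positivity, hf, f.nonneg', fun x => f.le_one, fun x hx => ?_, fun x hx => ?_,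
    f.hasCompactSupport, fun x => (hc x).trans (le_max_left _ _), fun x hx => ?_, fun x hx => ?_⟩
  · exact f.one_of_mem_closedBall (by simpa [f] using hx)
  · exact f.zero_of_le_dist (by simpa [f] using hx)
  · have := f.eventuallyEq_one_of_mem_ball (x := x) (by simpa [f] using hx)
    rw [this.fderiv_eq]; exact fderiv_const_apply _
  · have h : (f : F → ℝ) =ᶠ[nhds x] fun _ => 0 := by
      filter_upwards [(isOpen_lt continuous_const continuous_norm).mem_nhds hx] with z hz
      exact f.zero_of_le_dist (by simpa [f] using le_of_lt hz)
    rw [h.fderiv_eq]; exact fderiv_const_apply _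

lemma aux_tonelli {N : ℕ} (F : EuclideanSpace ℝ (Fin N) → ℝ≥0∞) (hF : Measurable F) (r : ℝ) :
    ∫⁻ y, ∫⁻ x in Metric.closedBall y r, F x =
      volume (Metric.closedBall (0 : EuclideanSpace ℝ (Fin N)) r) * ∫⁻ x, F x := by
  have hm : MeasurableSet {z : EuclideanSpace ℝ (Fin N) × EuclideanSpace ℝ (Fin N) | dist z.2 z.1 ≤ r} :=
    (isClosed_le (by fun_prop) continuous_const).measurableSet
  have h1 : ∀ y, ∫⁻ x in Metric.closedBall y r, F x =
      ∫⁻ x, (Metric.closedBall y r).indicator F x := fun y =>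
    (lintegral_indicator Metric.isClosed_closedBall.measurableSet _).symm
  simp_rw [h1]
  rw [lintegral_lintegral_swap]
  · rw [← lintegral_const_mul _ hF]
    congr 1; ext x
    have : ∀ y, (Metric.closedBall y r).indicator F x =
        (Metric.closedBall x r).indicator (fun _ => F x) y := by
      intro y
      simp only [Set.indicator, Metric.mem_closedBall, dist_comm]
    simp_rw [this]
    rw [lintegral_indicator Metric.isClosed_closedBall.measurableSet, setLIntegral_const, mul_comm,
      Measure.addHaar_closedBall_center]
  · apply Measurable.aemeasurable
    have : (Function.uncurry fun y x => (Metric.closedBall y r).indicator F x) =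
      {z : EuclideanSpace ℝ (Fin N) × EuclideanSpace ℝ (Fin N) | dist z.2 z.1 ≤ r}.indicator
        (fun z => F z.2) := by
      ext ⟨y, x⟩
      simp [Set.indicator, Function.uncurry]
    rw [this]
    exact (hF.comp measurable_snd).indicator hm

lemma aux_cutoff {N : ℕ} : ∃ c : ℝ, 1 ≤ c ∧ ∀ u : EuclideanSpace ℝ (Fin N) → ℝ, ContDiff ℝ 1 u →
    ∀ t r : ℝ, 0 < t → 0 < r → ∀ y : EuclideanSpace ℝ (Fin N),
    ∃ w : EuclideanSpace ℝ (Fin N) → ℝ, ContDiff ℝ 1 w ∧ HasCompactSupport w ∧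
      (∀ x ∈ Metric.closedBall y r, 2 * t ≤ |u x| → w x = t) ∧
      (∀ x, x ∉ Metric.closedBall y (2 * r) → fderiv ℝ w x = 0) ∧
      (∀ x, |u x| < t → fderiv ℝ w x = 0) ∧
      (∀ x, 2 * t < |u x| → ‖fderiv ℝ w x‖ ≤ c * (t / r)) ∧
      (∀ x, ‖fderiv ℝ w x‖ ≤ c * (t / r + ‖fderiv ℝ u x‖)) := by
  obtain ⟨f, c₁, hc₁, hf, hf0, hf1, hf2, hf3, hfc, hfb, -, -⟩ :=
    aux_bump (F := EuclideanSpace ℝ (Fin N))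
  obtain ⟨g, c₂, hc₂, hg, hg0, hg1, hg2, hg3, hgc, hgb, hg4, hg5⟩ := aux_bump (F := ℝ)
  refine ⟨1 + c₁ + c₂, by linarith, fun u hu t r ht hr y => ?_⟩
  set w : EuclideanSpace ℝ (Fin N) → ℝ :=
    fun x => t * (f (r⁻¹ • (x - y)) * (1 - g (t⁻¹ * u x))) with hw
  have hnorm : ∀ x, ‖r⁻¹ • (x - y)‖ = dist x y / r := by
    intro x
    rw [norm_smul, norm_inv, Real.norm_of_nonneg hr.le, dist_eq_norm]; field_simp
  have hnorm2 : ∀ x, ‖t⁻¹ * u x‖ = |u x| / t := by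
    intro x
    rw [norm_mul, norm_inv, Real.norm_of_nonneg ht.le, Real.norm_eq_abs]; field_simp
  have hwz : ∀ x, 2 * r < dist x y → w x = 0 := by
    intro x hx
    have : f (r⁻¹ • (x - y)) = 0 := hf3 _ (by rw [hnorm, le_div_iff₀ hr]; exact hx.le)
    simp [hw, this]
  have hwC : ContDiff ℝ 1 w := by
    rw [hw]; fun_prop
  have hD : ∀ x, HasFDerivAt w (t • (f (r⁻¹ • (x - y)) •
      (-((fderiv ℝ g (t⁻¹ * u x)).comp (t⁻¹ • fderiv ℝ u x))) + (1 - g (t⁻¹ * u x)) •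
        ((fderiv ℝ f (r⁻¹ • (x - y))).comp (r⁻¹ • ContinuousLinearMap.id ℝ _)))) x := by
    intro x
    have hux : HasFDerivAt u (fderiv ℝ u x) x := (hu.differentiable one_ne_zero x).hasFDerivAt
    have h1 : HasFDerivAt (fun x => f (r⁻¹ • (x - y)))
        ((fderiv ℝ f (r⁻¹ • (x - y))).comp (r⁻¹ • ContinuousLinearMap.id ℝ _)) x :=
      HasFDerivAt.comp x (hf.differentiable one_ne_zero _).hasFDerivAt
        (((hasFDerivAt_id x).sub_const y).const_smul r⁻¹)
    have h2 : HasFDerivAt (fun x => g (t⁻¹ * u x))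
        ((fderiv ℝ g (t⁻¹ * u x)).comp (t⁻¹ • fderiv ℝ u x)) x :=
      HasFDerivAt.comp x (hg.differentiable one_ne_zero _).hasFDerivAt
        (hux.const_mul t⁻¹)
    exact (h1.mul (h2.const_sub 1)).const_mul t
  have hA : ∀ x, ‖t • (f (r⁻¹ • (x - y)) •
      (-((fderiv ℝ g (t⁻¹ * u x)).comp (t⁻¹ • fderiv ℝ u x))))‖ ≤ c₂ * ‖fderiv ℝ u x‖ := by
    intro x
    rw [norm_smul, norm_smul, norm_neg, Real.norm_of_nonneg ht.le, Real.norm_of_nonneg (hf0 _)]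
    have : ‖(fderiv ℝ g (t⁻¹ * u x)).comp (t⁻¹ • fderiv ℝ u x)‖ ≤ c₂ * (t⁻¹ * ‖fderiv ℝ u x‖) := by
      refine (ContinuousLinearMap.opNorm_comp_le _ _).trans ?_
      rw [norm_smul, norm_inv, Real.norm_of_nonneg ht.le]
      gcongr
      exact hgb _
    calc _ ≤ t * (1 * (c₂ * (t⁻¹ * ‖fderiv ℝ u x‖))) := by
          gcongr
          exact hf1 _
      _ = _ := by field_simp
  have hB : ∀ x, ‖t • ((1 - g (t⁻¹ * u x)) •
        ((fderiv ℝ f (r⁻¹ • (x - y))).comp (r⁻¹ • ContinuousLinearMap.id ℝ _)))‖ ≤ c₁ * (t / r) := by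
    intro x
    rw [norm_smul, norm_smul, Real.norm_of_nonneg ht.le,
      Real.norm_of_nonneg (sub_nonneg.2 (hg1 (t⁻¹ * u x)))]
    have : ‖(fderiv ℝ f (r⁻¹ • (x - y))).comp (r⁻¹ • ContinuousLinearMap.id ℝ _)‖ ≤ c₁ * (r⁻¹ * 1) := by
      refine (ContinuousLinearMap.opNorm_comp_le _ _).trans ?_
      rw [norm_smul, norm_inv, Real.norm_of_nonneg hr.le]
      gcongr
      · exact hfb _
      · exact ContinuousLinearMap.norm_id_le
    calc _ ≤ t * (1 * (c₁ * (r⁻¹ * 1))) := by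
          gcongr
          linarith [hg0 (t⁻¹ * u x)]
      _ = _ := by field_simp
  have htr : 0 < t / r := by positivity
  refine ⟨w, hwC, ?_, ?_, ?_, ?_, ?_, ?_⟩
  · refine HasCompactSupport.intro (isCompact_closedBall y (2 * r)) fun x hx => hwz x ?_
    simpa using hx
  · intro x hx hux
    have h1 : f (r⁻¹ • (x - y)) = 1 := hf2 _ (by
      rw [hnorm, div_le_one hr]; exact hx)
    have h2 : g (t⁻¹ * u x) = 0 := hg3 _ (by rw [hnorm2, le_div_iff₀ ht]; exact hux)
    simp [hw, h1, h2]
  · intro x hx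
    have h : w =ᶠ[nhds x] fun _ => 0 := by
      filter_upwards [Metric.isClosed_closedBall.isOpen_compl.mem_nhds hx] with z hz
      exact hwz z (by simpa using hz)
    rw [h.fderiv_eq]; exact fderiv_const_apply _
  · intro x hx
    have h : w =ᶠ[nhds x] fun _ => 0 := by
      filter_upwards [(isOpen_lt (hu.continuous.abs) continuous_const).mem_nhds hx] with z hz
      have h2 : g (t⁻¹ * u z) = 1 := hg2 _ (by rw [hnorm2, div_le_one ht]; exact le_of_lt hz)
      simp [hw, h2]
    rw [h.fderiv_eq]; exact fderiv_const_apply _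
  · intro x hx
    rw [(hD x).fderiv, smul_add]
    have h2 : fderiv ℝ g (t⁻¹ * u x) = 0 := hg5 _ (by rw [hnorm2, lt_div_iff₀ ht]; exact hx)
    rw [h2, ContinuousLinearMap.zero_comp, neg_zero, smul_zero, smul_zero, zero_add]
    refine (hB x).trans ?_
    gcongr
    linarith
  · intro x
    rw [(hD x).fderiv, smul_add]
    refine (norm_add_le _ _).trans ?_
    have := hA x
    have := hB x
    have := norm_nonneg (fderiv ℝ u x)
    nlinarith [mul_nonneg hc₁.le this, mul_nonneg hc₂.le htr.le]

lemma aux_pw {c T d q p P : ℝ} (hc : 1 ≤ c) (hT : 1 ≤ T) (hd : 0 ≤ d) (hq : 1 ≤ q) (hqp : q ≤ p)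
    (hP : p ≤ P) : (16 * c * (T + d)) ^ q ≤ 2 * (32 * c) ^ P * (d ^ p + T ^ q) := by
  have h1 : (T + d) ^ q ≤ 2 ^ q * (T ^ q + d ^ q) := by
    calc (T + d) ^ q ≤ (2 * max T d) ^ q := by
          apply Real.rpow_le_rpow (by linarith) _ (by linarith)
          linarith [le_max_left T d, le_max_right T d]
      _ = 2 ^ q * (max T d) ^ q := Real.mul_rpow (by norm_num) (by positivity)
      _ ≤ _ := by
          gcongr
          rcases max_cases T d with ⟨h, _⟩ | ⟨h, _⟩ <;> rw [h]
          · linarith [Real.rpow_nonneg hd q]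
          · linarith [Real.rpow_nonneg (by linarith : 0 ≤ T) q]
  have h2 : d ^ q ≤ 1 + d ^ p := by
    rcases le_total d 1 with h | h
    · linarith [Real.rpow_le_one hd h (by linarith : 0 ≤ q), Real.rpow_nonneg hd p]
    · linarith [Real.rpow_le_rpow_of_exponent_le h hqp]
  have h3 : 1 ≤ T ^ q := Real.one_le_rpow hT (by linarith)
  have h4 : (32 * c) ^ q ≤ (32 * c) ^ P := Real.rpow_le_rpow_of_exponent_le (by linarith) (by linarith)
  have h5 := Real.rpow_nonneg hd p
  rw [Real.mul_rpow (by linarith) (by linarith)]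
  calc (16 * c) ^ q * (T + d) ^ q ≤ (16 * c) ^ q * (2 ^ q * (T ^ q + d ^ q)) := by gcongr
    _ = (32 * c) ^ q * (T ^ q + d ^ q) := by
        rw [← mul_assoc, ← Real.mul_rpow (by linarith) (by norm_num)]; ring_nf
    _ ≤ (32 * c) ^ P * (2 * (d ^ p + T ^ q)) := by
        gcongr
        linarith
    _ = _ := by ring

lemma aux_pstar_sub {N q p pp : ℝ} (hN : 0 < N) (hqp : q ≤ p) (hp : p ≤ pp) (hpp : pp < N) :
    N * p / (N - p) - N * q / (N - q) ≤ N ^ 2 / (N - pp) ^ 2 * (p - q) := by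
  have h1 : 0 < N - p := by linarith
  have h2 : 0 < N - q := by linarith
  have h3 : 0 < N - pp := by linarith
  have : N * p / (N - p) - N * q / (N - q) = N ^ 2 / ((N - p) * (N - q)) * (p - q) := by
    field_simp; ring
  rw [this]
  gcongr
  rw [sq]; gcongr <;> linarith

lemma aux_pstar_mono {N q p : ℝ} (hN : 0 < N) (hqp : q ≤ p) (hp : p < N) :
    N * q / (N - q) ≤ N * p / (N - p) := by
  have h1 : 0 < N - p := by linarith
  have h2 : 0 < N - q := by linarith
  rw [div_le_div_iff₀ h2 h1]
  nlinarith [mul_le_mul_of_nonneg_left hqp (mul_pos hN hN).le]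

lemma aux_osc {N : ℕ} (hN : 2 ≤ N)
    (p : EuclideanSpace ℝ (Fin N) → ℝ) (pp : ℝ) (hpp : pp < N)
    (hp_bounds : ∀ x, p x ≤ pp)
    (C₁ : ℝ) (hC₁ : 0 < C₁)
    (hp_logHolder : ∀ x y : EuclideanSpace ℝ (Fin N),
      0 < dist x y → dist x y < 1 / 2 →
        |p x - p y| * Real.log (1 / dist x y) ≤ C₁)
    {s t : ℝ} (hs : 0 < s) (ht : 1 ≤ t) (x x0 : EuclideanSpace ℝ (Fin N))
    (hd : dist x x0 ≤ t ^ (-s) / 4) (h0 : p x0 ≤ p x) :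
    t ^ (N * p x / (N - p x)) ≤ Real.exp (N ^ 2 / (N - pp) ^ 2 * (C₁ / s)) *
      t ^ (N * p x0 / (N - p x0)) := by
  have hN' : (2:ℝ) ≤ N := by exact_mod_cast hN
  have ht0 : 0 < t := by linarith
  have hlt : 0 ≤ Real.log t := Real.log_nonneg ht
  have hL : 0 ≤ (N:ℝ) ^ 2 / (N - pp) ^ 2 := by positivity
  have key : (p x - p x0) * Real.log t ≤ C₁ / s := by
    rcases eq_or_ne x x0 with rfl | hne
    · simp; positivity
    have hdp : 0 < dist x x0 := dist_pos.2 hne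
    have h1 : t ^ (-s) ≤ 1 := Real.rpow_le_one_of_one_le_of_nonpos ht (by linarith)
    have h2 := hp_logHolder x x0 hdp (by linarith)
    rw [abs_of_nonneg (by linarith)] at h2
    have h3 : s * Real.log t ≤ Real.log (1 / dist x x0) := by
      rw [← Real.log_rpow ht0]
      apply Real.log_le_log (by positivity)
      rw [le_div_iff₀ hdp]
      calc t ^ s * dist x x0 ≤ t ^ s * (t ^ (-s) / 4) := by gcongr
        _ = 1 / 4 := by rw [← mul_div_assoc, ← Real.rpow_add ht0]; simp
        _ ≤ 1 := by norm_num
    rw [le_div_iff₀ hs]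
    calc _ = (p x - p x0) * (s * Real.log t) := by ring
      _ ≤ _ := (mul_le_mul_of_nonneg_left h3 (by linarith)).trans h2
  rw [Real.rpow_def_of_pos ht0, Real.rpow_def_of_pos ht0, ← Real.exp_add]
  apply Real.exp_le_exp.2
  have h5 := aux_pstar_sub (N := N) (by linarith) h0 (hp_bounds x) hpp
  have h6 := mul_le_mul_of_nonneg_right h5 hlt
  have h7 := mul_le_mul_of_nonneg_left key hL
  nlinarith

/-- Right-hand side density at level `t`. -/
noncomputable def auxG {N : ℕ} (p u : EuclideanSpace ℝ (Fin N) → ℝ) (s t : ℝ)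
    (x : EuclideanSpace ℝ (Fin N)) : ℝ≥0∞ :=
  {x | t ≤ |u x| ∧ |u x| ≤ 2 * t}.indicator (fun x => ENNReal.ofReal (‖fderiv ℝ u x‖ ^ p x)) x +
  {x | t ≤ |u x|}.indicator (fun x => ENNReal.ofReal (t ^ (p x + s * (N * p x / (N - p x))))) x

lemma aux_local {N : ℕ} (hN : 2 ≤ N)
    (p : EuclideanSpace ℝ (Fin N) → ℝ) (hp_cont : Continuous p)
    (pp : ℝ) (hpp : pp < N) (hp_bounds : ∀ x, 1 ≤ p x ∧ p x ≤ pp)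
    (C₁ : ℝ) (hC₁ : 0 < C₁)
    (hp_logHolder : ∀ x y : EuclideanSpace ℝ (Fin N),
      0 < dist x y → dist x y < 1 / 2 →
        |p x - p y| * Real.log (1 / dist x y) ≤ C₁)
    (s : ℝ) (hs : 0 < s) :
    ∃ K : ℝ≥0, ∀ u : EuclideanSpace ℝ (Fin N) → ℝ, ContDiff ℝ 1 u →
      ∫⁻ x, ENNReal.ofReal (‖fderiv ℝ u x‖ ^ p x) ≤ 1 →
      ∫⁻ x, ENNReal.ofReal (|u x| ^ p x) ≤ 1 →
      ∀ t : ℝ, 1 ≤ t → ∀ y : EuclideanSpace ℝ (Fin N),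
      ∫⁻ x in Metric.closedBall y (t ^ (-s) / 16),
        {x | 2 * t ≤ |u x|}.indicator
          (fun x => ENNReal.ofReal (t ^ (N * p x / (N - p x)))) x ≤
      K * ∫⁻ x in Metric.closedBall y (2 * (t ^ (-s) / 16)), auxG p u s t x := by
  have hN' : (2:ℝ) ≤ N := by exact_mod_cast hN
  have hpp1 : 1 ≤ pp := (hp_bounds 0).1.trans (hp_bounds 0).2
  obtain ⟨S, hS⟩ := aux_sobolev hN pp hpp hpp1
  obtain ⟨c, hc, hcut⟩ := aux_cutoff (N := N)
  set Ko : ℝ := Real.exp (N ^ 2 / (N - pp) ^ 2 * (C₁ / s)) with hKo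
  set C : ℝ := 2 * (32 * c) ^ pp with hC
  have hC1 : 1 ≤ C := by
    have : 1 ≤ (32 * c) ^ pp := Real.one_le_rpow (by linarith) (by linarith)
    linarith
  set Θ : ℝ := N / (N - pp) with hΘ
  refine ⟨Ko.toNNReal * (S * (C.toNNReal ^ Θ * 2 ^ Θ)), fun u hu hI1 hI2 t ht y => ?_⟩
  set r : ℝ := t ^ (-s) / 16 with hr
  have ht0 : 0 < t := by linarith
  have hr0 : 0 < r := by positivity
  set B := Metric.closedBall y (2 * r) with hB
  have hBm : MeasurableSet B := Metric.isClosed_closedBall.measurableSet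
  have hm1 : MeasurableSet {x | t ≤ |u x|} :=
    (isClosed_le continuous_const hu.continuous.abs).measurableSet
  have hm2 : MeasurableSet {x | t ≤ |u x| ∧ |u x| ≤ 2 * t} :=
    hm1.inter (isClosed_le hu.continuous.abs continuous_const).measurableSet
  have hDc : Continuous (fderiv ℝ u) := hu.continuous_fderiv one_ne_zero
  obtain ⟨x0, hx0, hmin⟩ := (isCompact_closedBall y (2 * r)).exists_isMinOn
    ⟨y, by simp; positivity⟩ hp_cont.continuousOn
  have hmin' : ∀ x ∈ B, p x0 ≤ p x := fun x hx => hmin hx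
  set q := p x0 with hq
  obtain ⟨hq1, hqpp⟩ := hp_bounds x0
  have hNq : 0 < (N:ℝ) - q := by linarith
  have hNpp : 0 < (N:ℝ) - pp := by linarith
  set θ : ℝ := N / (N - q) with hθ
  have hθ1 : 1 ≤ θ := by rw [hθ, le_div_iff₀ hNq]; linarith
  have hθΘ : θ ≤ Θ := by rw [hθ, hΘ]; gcongr
  have hqθ : N * q / (N - q) = q * θ := by rw [hθ]; ring
  obtain ⟨w, hw, hwc, hw1, hw2, hw3, hw4, hw5⟩ := hcut u hu t r ht0 hr0 y
  have hsob := hS q hq1 hqpp w hw hwc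
  set T : ℝ := t ^ (1 + s) with hT
  have hT1 : 1 ≤ T := Real.one_le_rpow ht (by linarith)
  have htr : t / r = 16 * T := by
    rw [hT, hr, Real.rpow_add ht0, Real.rpow_neg ht0.le, Real.rpow_one]; field_simp
  -- the left-hand side
  have step1 : ∫⁻ x in Metric.closedBall y r, {x | 2 * t ≤ |u x|}.indicator
          (fun x => ENNReal.ofReal (t ^ (N * p x / (N - p x)))) x ≤
      ENNReal.ofReal Ko * ∫⁻ x, ‖w x‖ₑ ^ (N * q / (N - q)) := by
    rw [← lintegral_const_mul' _ _ ENNReal.ofReal_ne_top]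
    refine le_trans (setLIntegral_mono' Metric.isClosed_closedBall.measurableSet ?_)
      (setLIntegral_le_lintegral (Metric.closedBall y r) _)
    intro x hx
    by_cases hux : 2 * t ≤ |u x|
    · rw [Set.indicator_of_mem (by exact hux), hw1 x hx hux, Real.enorm_eq_ofReal ht0.le,
        ENNReal.ofReal_rpow_of_pos ht0, ← ENNReal.ofReal_mul (Real.exp_pos _).le]
      apply ENNReal.ofReal_le_ofReal
      have hxB : x ∈ B := Metric.closedBall_subset_closedBall (by linarith) hx
      refine aux_osc hN p pp hpp (fun x => (hp_bounds x).2) C₁ hC₁ hp_logHolder hs ht x x0 ?_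
        (hmin' x hxB)
      have h1 : dist x y ≤ 2 * r := hxB
      have h2 : dist x0 y ≤ 2 * r := hx0
      have h3 := dist_triangle_right x x0 y
      have : t ^ (-s) / 4 = 4 * r := by rw [hr]; ring
      linarith
    · rw [Set.indicator_of_notMem (by exact hux)]
      exact zero_le
  -- gradient estimate
  set X : ℝ≥0∞ := ∫⁻ x in B, {x | t ≤ |u x| ∧ |u x| ≤ 2 * t}.indicator
    (fun x => ENNReal.ofReal (‖fderiv ℝ u x‖ ^ p x)) x with hX
  set m : ℝ≥0∞ := ∫⁻ x in B, {x | t ≤ |u x|}.indicator (fun _ => 1) x with hm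
  have hmul : ∀ a : ℝ, ENNReal.ofReal a * m =
      ∫⁻ x in B, {x | t ≤ |u x|}.indicator (fun _ => ENNReal.ofReal a) x := by
    intro a
    rw [hm, ← lintegral_const_mul' _ _ ENNReal.ofReal_ne_top]
    congr 1; ext x
    simp only [Set.indicator]; split_ifs <;> simp
  have hXm : Measurable ({x | t ≤ |u x| ∧ |u x| ≤ 2 * t}.indicator
      (fun x => ENNReal.ofReal (‖fderiv ℝ u x‖ ^ p x))) :=
    Measurable.indicator (by
      exact (hDc.norm.measurable.pow hp_cont.measurable).ennreal_ofReal) hm2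
  have step2 : ∫⁻ x, ‖fderiv ℝ w x‖ₑ ^ q ≤
      ENNReal.ofReal C * (X + ENNReal.ofReal (T ^ q) * m) := by
    rw [hmul, hX, ← lintegral_add_left hXm, ← lintegral_const_mul' _ _ ENNReal.ofReal_ne_top,
      ← lintegral_indicator hBm]
    have hz : ∀ x, fderiv ℝ w x = 0 → ‖fderiv ℝ w x‖ₑ ^ q = 0 := by
      intro x hx
      rw [← ofReal_norm, hx, norm_zero, ENNReal.ofReal_zero,
        ENNReal.zero_rpow_of_pos (by linarith : 0 < q)]
    apply lintegral_mono
    intro x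
    by_cases hxB : x ∈ B
    swap
    · exact (hz x (hw2 x hxB)).trans_le zero_le
    by_cases hxt : |u x| < t
    · exact (hz x (hw3 x hxt)).trans_le zero_le
    push Not at hxt
    have hd0 := norm_nonneg (fderiv ℝ u x)
    beta_reduce
    rw [Set.indicator_of_mem hxB, ← ofReal_norm,
      ENNReal.ofReal_rpow_of_nonneg (norm_nonneg _) (by linarith),
      Set.indicator_of_mem (s := {x | t ≤ |u x|}) (by exact hxt)]
    by_cases hx2 : |u x| ≤ 2 * t
    · rw [Set.indicator_of_mem (by exact ⟨hxt, hx2⟩), ← ENNReal.ofReal_add (by positivity) (by positivity),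
        ← ENNReal.ofReal_mul (by positivity)]
      apply ENNReal.ofReal_le_ofReal
      refine le_trans ?_ (aux_pw hc hT1 hd0 hq1 (hmin' x hxB) (hp_bounds x).2)
      refine Real.rpow_le_rpow (norm_nonneg _) ((hw5 x).trans ?_) (by linarith)
      rw [htr]
      nlinarith
    · rw [Set.indicator_of_notMem (by intro h; exact hx2 h.2), zero_add,
        ← ENNReal.ofReal_mul (by positivity)]
      apply ENNReal.ofReal_le_ofReal
      push Not at hx2
      have := aux_pw (d := 0) hc hT1 le_rfl hq1 (hmin' x hxB) (hp_bounds x).2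
      rw [Real.zero_rpow (by linarith [(hp_bounds x).1]), zero_add] at this
      refine le_trans ?_ this
      refine Real.rpow_le_rpow (norm_nonneg _) ((hw4 x hx2).trans ?_) (by linarith)
      rw [htr]
      linarith
  have hX1 : X ≤ 1 := by
    refine le_trans (setLIntegral_le_lintegral _ _) (le_trans (lintegral_mono ?_) hI1)
    intro x
    exact Set.indicator_le_self _ _ _
  set Y : ℝ≥0∞ := ENNReal.ofReal (t ^ q) * m with hY
  have hY1 : Y ≤ 1 := by
    rw [hY, hmul]
    refine le_trans (setLIntegral_mono' hBm ?_) ((setLIntegral_le_lintegral B _).trans hI2)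
    intro x hxB
    by_cases hx : t ≤ |u x|
    swap
    · rw [Set.indicator_of_notMem (by exact hx)]; exact zero_le
    rw [Set.indicator_of_mem (by exact hx)]
    apply ENNReal.ofReal_le_ofReal
    exact (Real.rpow_le_rpow_of_exponent_le ht (hmin' x hxB)).trans
      (Real.rpow_le_rpow ht0.le hx (by linarith [(hp_bounds x).1]))
  have hTY : ENNReal.ofReal (T ^ q) * m = ENNReal.ofReal (t ^ (s * q)) * Y := by
    rw [hY, ← mul_assoc, ← ENNReal.ofReal_mul (by positivity), hT, ← Real.rpow_mul ht0.le,
      ← Real.rpow_add ht0]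
    ring_nf
  have hτ : (ENNReal.ofReal (t ^ (s * q)) * Y) ^ θ ≤ ENNReal.ofReal (t ^ (s * (q * θ))) * Y := by
    rw [ENNReal.mul_rpow_of_nonneg _ _ (by linarith),
      ENNReal.ofReal_rpow_of_pos (by positivity), ← Real.rpow_mul ht0.le, mul_assoc]
    gcongr
    exact ENNReal.rpow_le_self_of_le_one hY1 hθ1
  have step3 : X + ENNReal.ofReal (t ^ (s * (q * θ))) * Y ≤ ∫⁻ x in B, auxG p u s t x := by
    unfold auxG
    rw [lintegral_add_left hXm]
    gcongr
    rw [hY, ← mul_assoc, ← ENNReal.ofReal_mul (by positivity), hmul]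
    refine setLIntegral_mono' hBm ?_
    intro x hxB
    apply Set.indicator_le_indicator
    apply ENNReal.ofReal_le_ofReal
    rw [← Real.rpow_add ht0]
    apply Real.rpow_le_rpow_of_exponent_le ht
    have h1 := hmin' x hxB
    have h2 := aux_pstar_mono (N := N) (by linarith) h1 (by linarith [(hp_bounds x).2])
    rw [hqθ] at h2
    have := mul_le_mul_of_nonneg_left h2 hs.le
    linarith
  have h2Θ : (2:ℝ≥0∞) ^ (θ - 1) ≤ 2 ^ Θ :=
    ENNReal.rpow_le_rpow_of_exponent_le (by norm_num) (by linarith)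
  have hCΘ : (ENNReal.ofReal C) ^ θ ≤ (ENNReal.ofReal C) ^ Θ :=
    ENNReal.rpow_le_rpow_of_exponent_le (by simpa using hC1) hθΘ
  have hΘ0 : 0 ≤ Θ := by linarith
  calc _ ≤ ENNReal.ofReal Ko * ∫⁻ x, ‖w x‖ₑ ^ (N * q / (N - q)) := step1
    _ ≤ ENNReal.ofReal Ko * (S * (ENNReal.ofReal C * (X + ENNReal.ofReal (T ^ q) * m)) ^ θ) := by
        gcongr
        refine hsob.trans ?_
        gcongr
    _ ≤ ENNReal.ofReal Ko * (S * ((ENNReal.ofReal C) ^ θ *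
          (2 ^ (θ - 1) * (X ^ θ + (ENNReal.ofReal (t ^ (s * q)) * Y) ^ θ)))) := by
        rw [hTY, ENNReal.mul_rpow_of_nonneg _ _ (by linarith : 0 ≤ θ)]
        gcongr
        exact ENNReal.rpow_add_le_mul_rpow_add_rpow _ _ hθ1
    _ ≤ ENNReal.ofReal Ko * (S * ((ENNReal.ofReal C) ^ Θ *
          (2 ^ Θ * (∫⁻ x in B, auxG p u s t x)))) := by
        gcongr
        refine le_trans ?_ step3
        gcongr
        exact ENNReal.rpow_le_self_of_le_one hX1 hθ1
    _ = _ := by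
        push_cast
        rw [ENNReal.coe_rpow_of_nonneg _ hΘ0, ENNReal.coe_rpow_of_nonneg _ hΘ0]
        simp only [ENNReal.ofReal, mul_assoc, ENNReal.coe_ofNat]

lemma aux_level {N : ℕ} (p u : EuclideanSpace ℝ (Fin N) → ℝ) (s t : ℝ) (ht : 0 < t) (K : ℝ≥0)
    (F : EuclideanSpace ℝ (Fin N) → ℝ≥0∞) (hF : Measurable F) (hG : Measurable (auxG p u s t))
    (h : ∀ y, ∫⁻ x in Metric.closedBall y (t ^ (-s) / 16), F x ≤
      K * ∫⁻ x in Metric.closedBall y (2 * (t ^ (-s) / 16)), auxG p u s t x) :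
    ∫⁻ x, F x ≤ K * 2 ^ N * ∫⁻ x, auxG p u s t x := by
  have hr : 0 < t ^ (-s) / 16 := by positivity
  have h1 := lintegral_mono (μ := volume) h
  rw [lintegral_const_mul' _ _ ENNReal.coe_ne_top, aux_tonelli F hF, aux_tonelli _ hG,
    Measure.addHaar_closedBall_mul _ _ (by norm_num) hr.le] at h1
  have hfr : Module.finrank ℝ (EuclideanSpace ℝ (Fin N)) = N := by simp
  rw [hfr, ENNReal.ofReal_pow (by norm_num), ENNReal.ofReal_ofNat] at h1
  have hv0 : volume (Metric.closedBall (0 : EuclideanSpace ℝ (Fin N)) (t ^ (-s) / 16)) ≠ 0 :=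
    (Metric.measure_closedBall_pos _ _ hr).ne'
  have hv1 : volume (Metric.closedBall (0 : EuclideanSpace ℝ (Fin N)) (t ^ (-s) / 16)) ≠ ∞ :=
    measure_closedBall_lt_top.ne
  rw [← ENNReal.mul_le_mul_iff_right hv0 hv1]
  refine h1.trans (le_of_eq ?_)
  ring

lemma aux_geom (a e : ℝ) (ha : 0 ≤ a) (he : 1 ≤ e) :
    ∑' k : ℕ, (if (2:ℝ) ^ k ≤ a then ENNReal.ofReal (((2:ℝ) ^ k) ^ e) else 0) ≤
      2 * ENNReal.ofReal (a ^ e) := by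
  rcases lt_or_ge a 1 with h | h
  · have : ∀ k : ℕ, ¬ ((2:ℝ) ^ k ≤ a) := fun k hk => by
      have : (1:ℝ) ≤ 2 ^ k := one_le_pow₀ (by norm_num)
      linarith
    simp [this]
  obtain ⟨n, hn1, hn2⟩ := exists_nat_pow_near h (by norm_num : (1:ℝ) < 2)
  have ha0 : 0 < a := by linarith
  rw [tsum_eq_sum (s := Finset.range (n + 1))]
  · calc _ ≤ ∑ k ∈ Finset.range (n + 1), ENNReal.ofReal ((2:ℝ) ^ k * a ^ (e - 1)) := by
          apply Finset.sum_le_sum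
          intro k _
          split_ifs with hk
          · apply ENNReal.ofReal_le_ofReal
            have h2 : (0:ℝ) < 2 ^ k := by positivity
            calc ((2:ℝ) ^ k) ^ e = ((2:ℝ) ^ k) ^ (1 + (e - 1)) := by ring_nf
              _ = 2 ^ k * ((2:ℝ) ^ k) ^ (e - 1) := by rw [Real.rpow_add h2, Real.rpow_one]
              _ ≤ _ := by
                gcongr
          · exact zero_le
      _ = ENNReal.ofReal (∑ k ∈ Finset.range (n + 1), (2:ℝ) ^ k * a ^ (e - 1)) := by
          rw [ENNReal.ofReal_sum_of_nonneg]
          intros; positivity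
      _ ≤ ENNReal.ofReal (2 * a ^ e) := by
          apply ENNReal.ofReal_le_ofReal
          rw [← Finset.sum_mul, geom_sum_eq (by norm_num)]
          have h3 : a ^ e = a * a ^ (e - 1) := by
            rw [← Real.rpow_one_add' ha0.le (by linarith)]; ring_nf
          rw [h3, ← mul_assoc]
          gcongr
          rw [pow_succ]
          linarith
      _ = _ := by rw [ENNReal.ofReal_mul (by norm_num), ENNReal.ofReal_ofNat]
  · intro k hk
    rw [if_neg]
    intro h4
    simp only [Finset.mem_range, not_lt] at hk
    have : (2:ℝ) ^ (n + 1) ≤ 2 ^ k := pow_le_pow_right₀ (by norm_num) hk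
    linarith

lemma aux_count (a : ℝ) (ha : 0 ≤ a) (D : ℝ≥0∞) :
    ∑' k : ℕ, (if (2:ℝ) ^ k ≤ a ∧ a ≤ 2 * 2 ^ k then D else 0) ≤ 4 * D := by
  rcases ha.eq_or_lt with rfl | ha0
  · have : ∀ k : ℕ, ¬ ((2:ℝ) ^ k ≤ 0) := fun k hk => by
      have : (1:ℝ) ≤ 2 ^ k := one_le_pow₀ (by norm_num)
      linarith
    simp [this]
  have h := aux_geom a 1 ha le_rfl
  have hle : ∀ k : ℕ, (if (2:ℝ) ^ k ≤ a ∧ a ≤ 2 * 2 ^ k then D else 0) ≤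
      (ENNReal.ofReal (2 / a) * D) * (if (2:ℝ) ^ k ≤ a then ENNReal.ofReal (((2:ℝ) ^ k) ^ (1:ℝ)) else 0) := by
    intro k
    split_ifs with h1 h2 h3
    · rw [mul_right_comm, ← ENNReal.ofReal_mul (by positivity), Real.rpow_one]
      refine le_mul_of_one_le_left zero_le ?_
      rw [ENNReal.one_le_ofReal, div_mul_eq_mul_div, le_div_iff₀ ha0]
      linarith [h1.2]
    · exact absurd h1.1 h2
    · exact zero_le
    · exact zero_le
  refine (ENNReal.tsum_le_tsum hle).trans ?_
  rw [ENNReal.tsum_mul_left]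
  refine (mul_le_mul_right h _).trans (le_of_eq ?_)
  rw [Real.rpow_one, mul_right_comm, mul_left_comm, ← ENNReal.ofReal_mul (by positivity),
    div_mul_cancel₀ _ ha0.ne', ENNReal.ofReal_ofNat]
  norm_num

lemma aux_lower (a e P : ℝ) (ha : 2 ≤ a) (he : 0 ≤ e) (heP : e ≤ P) :
    ENNReal.ofReal (a ^ e) ≤ ENNReal.ofReal (4 ^ P) *
      ∑' k : ℕ, (if 2 * (2:ℝ) ^ k ≤ a then ENNReal.ofReal (((2:ℝ) ^ k) ^ e) else 0) := by
  obtain ⟨n, hn1, hn2⟩ := exists_nat_pow_near (by linarith : 1 ≤ a / 2) (by norm_num : (1:ℝ) < 2)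
  refine le_trans ?_ (mul_le_mul_right (ENNReal.le_tsum n) _)
  rw [if_pos (by linarith), ← ENNReal.ofReal_mul (by positivity)]
  apply ENNReal.ofReal_le_ofReal
  rw [pow_succ] at hn2
  calc a ^ e ≤ (4 * 2 ^ n) ^ e := Real.rpow_le_rpow (by linarith) (by linarith) he
    _ = 4 ^ e * ((2:ℝ) ^ n) ^ e := Real.mul_rpow (by norm_num) (by positivity)
    _ ≤ _ := by
      gcongr
      norm_num

lemma aux_absorb {a p e s T P : ℝ} (ha : 1 ≤ a) (hT : 1 ≤ T) (hs : 0 < s) (he : p + s * e + s ≤ e)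
    (heP : e ≤ P) (hp : 0 ≤ p) (he0 : 0 ≤ e) :
    a ^ (p + s * e) ≤ T ^ (-s) * a ^ e + T ^ (s * P) * a ^ p := by
  have ha0 : 0 < a := by linarith
  have hT0 : 0 < T := by linarith
  rcases le_total a T with h | h
  · have : a ^ (p + s * e) ≤ T ^ (s * P) * a ^ p := by
      rw [Real.rpow_add ha0, mul_comm]
      gcongr
      calc a ^ (s * e) ≤ T ^ (s * e) := Real.rpow_le_rpow ha0.le h (by positivity)
        _ ≤ _ := Real.rpow_le_rpow_of_exponent_le hT (by gcongr)
    have : 0 ≤ T ^ (-s) * a ^ e := by positivity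
    linarith
  · have : a ^ (p + s * e) ≤ T ^ (-s) * a ^ e := by
      calc a ^ (p + s * e) ≤ a ^ (-s + e) := Real.rpow_le_rpow_of_exponent_le ha (by linarith)
        _ = a ^ (-s) * a ^ e := Real.rpow_add ha0 _ _
        _ ≤ _ := mul_le_mul_of_nonneg_right
          (Real.rpow_le_rpow_of_nonpos hT0 h (by linarith)) (by positivity)
    have : 0 ≤ T ^ (s * P) * a ^ p := by positivity
    linarith

lemma aux_core {N : ℕ} (hN : 2 ≤ N)
    (p : EuclideanSpace ℝ (Fin N) → ℝ) (hp_cont : Continuous p)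
    (pp : ℝ) (hpp : pp < N) (hp_bounds : ∀ x, 1 ≤ p x ∧ p x ≤ pp)
    (C₁ : ℝ) (hC₁ : 0 < C₁)
    (hp_logHolder : ∀ x y : EuclideanSpace ℝ (Fin N),
      0 < dist x y → dist x y < 1 / 2 →
        |p x - p y| * Real.log (1 / dist x y) ≤ C₁) :
    ∃ K : ℝ≥0, ∀ u : EuclideanSpace ℝ (Fin N) → ℝ, ContDiff ℝ 1 u →
      ∫⁻ x, ENNReal.ofReal (‖fderiv ℝ u x‖ ^ p x) ≤ 1 →
      ∫⁻ x, ENNReal.ofReal (|u x| ^ p x) ≤ 1 →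
      ∫⁻ x, ENNReal.ofReal (|u x| ^ (N * p x / (N - p x))) ≠ ∞ →
      ∫⁻ x, ENNReal.ofReal (|u x| ^ (N * p x / (N - p x))) ≤ K := by
  have hN' : (2:ℝ) ≤ N := by exact_mod_cast hN
  have hN0 : (0:ℝ) < N := by linarith
  set s : ℝ := 1 / (2 * N) with hs
  have hs0 : 0 < s := by positivity
  obtain ⟨K, hK⟩ := aux_local hN p hp_cont pp hpp hp_bounds C₁ hC₁ hp_logHolder s hs0
  set P : ℝ := N * pp / (N - pp) with hP
  set L : ℝ := 4 ^ P * (K * 2 ^ N) with hL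
  have hL0 : 0 ≤ L := by positivity
  set T : ℝ := (4 * L + 1) ^ (1 / s) with hT
  have hT1 : 1 ≤ T := Real.one_le_rpow (by linarith) (by positivity)
  have hTs : T ^ (-s) = (4 * L + 1)⁻¹ := by
    rw [hT, ← Real.rpow_mul (by linarith), ← Real.rpow_neg_one]
    congr 1
    field_simp
  have hLT : L * 2 * T ^ (-s) ≤ 1 / 2 := by
    rw [hTs, mul_inv_le_iff₀ (by linarith)]
    linarith
  set A : ℝ := 2 ^ P + L * (4 + 2 * T ^ (s * P)) with hA
  have hA0 : 0 ≤ A := by positivity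
  refine ⟨(2 * A).toNNReal, fun u hu hI1 hI2 hfin => ?_⟩
  set e : EuclideanSpace ℝ (Fin N) → ℝ := fun x => N * p x / (N - p x) with he
  have hNp : ∀ x, 0 < (N:ℝ) - p x := fun x => by linarith [(hp_bounds x).2]
  have hp0 : ∀ x, 0 < p x := fun x => by linarith [(hp_bounds x).1]
  have hpe : ∀ x, p x ≤ e x := fun x => by
    simp only [he]
    rw [le_div_iff₀ (hNp x)]
    nlinarith [mul_pos (hp0 x) (hp0 x)]
  have hkey : ∀ x, p x + s * e x + s ≤ e x := fun x => by
    have h1 : e x - p x = p x * (e x / N) := by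
      have := hNp x
      simp only [he]; field_simp; ring
    have h2 : e x / N = 2 * (s * e x) := by rw [hs]; field_simp
    have h3 : 1 ≤ e x := (hp_bounds x).1.trans (hpe x)
    rw [h2] at h1
    have h4 : 0 ≤ s * e x := by nlinarith
    nlinarith [mul_le_mul_of_nonneg_right (hp_bounds x).1 h4]
  have heP : ∀ x, e x ≤ P := fun x => aux_pstar_mono hN0 (hp_bounds x).2 hpp
  have hem : Measurable e := by
    have := hp_cont.measurable
    simp only [he]; fun_prop
  have hpm := hp_cont.measurable
  have hum := hu.continuous.measurable
  have hDm : Measurable fun x => ENNReal.ofReal (‖fderiv ℝ u x‖ ^ p x) :=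
    ((hu.continuous_fderiv one_ne_zero).norm.measurable.pow hpm).ennreal_ofReal
  have hPm : Measurable fun x => ENNReal.ofReal (|u x| ^ p x) :=
    (hu.continuous.abs.measurable.pow hpm).ennreal_ofReal
  have hEm : Measurable fun x => ENNReal.ofReal (|u x| ^ e x) :=
    (hu.continuous.abs.measurable.pow hem).ennreal_ofReal
  have hFm : ∀ t : ℝ, Measurable ({x | 2 * t ≤ |u x|}.indicator
      (fun x => ENNReal.ofReal (t ^ e x))) := fun t =>
    Measurable.indicator ((measurable_const.pow hem).ennreal_ofReal)
      (isClosed_le continuous_const hu.continuous.abs).measurableSet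
  have hGm : ∀ t : ℝ, Measurable (auxG p u s t) := by
    intro t
    have hm1 : MeasurableSet {x | t ≤ |u x|} :=
      (isClosed_le continuous_const hu.continuous.abs).measurableSet
    have hm2 : MeasurableSet {x | t ≤ |u x| ∧ |u x| ≤ 2 * t} :=
      hm1.inter (isClosed_le hu.continuous.abs continuous_const).measurableSet
    exact (hDm.indicator hm2).add (Measurable.indicator
      ((measurable_const.pow (hpm.add (hem.const_mul s))).ennreal_ofReal) hm1)
  have hlev : ∀ k : ℕ, ∫⁻ x, {x | 2 * (2:ℝ) ^ k ≤ |u x|}.indicator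
      (fun x => ENNReal.ofReal (((2:ℝ) ^ k) ^ e x)) x ≤
      K * 2 ^ N * ∫⁻ x, auxG p u s (2 ^ k) x := fun k =>
    aux_level p u s (2 ^ k) (by positivity) K _ (hFm _) (hGm _)
      (hK u hu hI1 hI2 (2 ^ k) (one_le_pow₀ (by norm_num)))
  set I : ℝ≥0∞ := ∫⁻ x, ENNReal.ofReal (|u x| ^ e x) with hI
  -- upper bound by levels
  have hup : I ≤ ENNReal.ofReal (2 ^ P) * (∫⁻ x, ENNReal.ofReal (|u x| ^ p x)) +
      ENNReal.ofReal (4 ^ P) * ∑' k : ℕ, ∫⁻ x, {x | 2 * (2:ℝ) ^ k ≤ |u x|}.indicator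
      (fun x => ENNReal.ofReal (((2:ℝ) ^ k) ^ e x)) x := by
    rw [← lintegral_tsum (fun k => (hFm _).aemeasurable),
      ← lintegral_const_mul' _ _ ENNReal.ofReal_ne_top,
      ← lintegral_const_mul' _ _ ENNReal.ofReal_ne_top, ← lintegral_add_left (hPm.const_mul _)]
    apply lintegral_mono
    intro x
    beta_reduce
    have he0 : 0 ≤ e x := (hp0 x).le.trans (hpe x)
    rcases le_total 2 |u x| with h | h
    · refine le_trans (aux_lower _ _ P h he0 (heP x)) ?_
      refine le_trans (le_of_eq ?_) (le_add_of_nonneg_left zero_le)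
      congr 1
    · refine le_trans ?_ (le_add_of_nonneg_right zero_le)
      rw [← ENNReal.ofReal_mul (by positivity)]
      apply ENNReal.ofReal_le_ofReal
      have h1P : (1:ℝ) ≤ 2 ^ P := Real.one_le_rpow (by norm_num) (he0.trans (heP x))
      rcases le_total |u x| 1 with h1 | h1
      · have h2 := Real.rpow_le_rpow_of_exponent_ge_of_imp (abs_nonneg (u x)) h1 (hpe x)
          (fun _ h => absurd h ((hp0 x).trans_le (hpe x)).ne')
        have : 0 ≤ |u x| ^ p x := by positivity
        nlinarith
      · calc |u x| ^ e x ≤ 2 ^ e x := Real.rpow_le_rpow (abs_nonneg _) h he0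
          _ ≤ 2 ^ P := Real.rpow_le_rpow_of_exponent_le (by norm_num) (heP x)
          _ ≤ _ := le_mul_of_one_le_right (by positivity) (Real.one_le_rpow h1 (hp0 x).le)
  have hdown : ∑' k : ℕ, ∫⁻ x, auxG p u s (2 ^ k) x ≤
      4 * 1 + 2 * (ENNReal.ofReal (T ^ (-s)) * I + ENNReal.ofReal (T ^ (s * P)) * 1) := by
    refine le_trans ?_ (add_le_add (mul_le_mul_right hI1 _) (mul_le_mul_right
      (add_le_add le_rfl (mul_le_mul_right hI2 _)) _))
    rw [← lintegral_tsum (fun k => (hGm _).aemeasurable), hI,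
      ← lintegral_const_mul' _ _ ENNReal.ofReal_ne_top,
      ← lintegral_const_mul' _ _ ENNReal.ofReal_ne_top,
      ← lintegral_add_left (hEm.const_mul _),
      ← lintegral_const_mul' _ _ (by simp),
      ← lintegral_const_mul' _ _ (by simp), ← lintegral_add_left (hDm.const_mul _)]
    apply lintegral_mono
    intro x
    beta_reduce
    simp only [auxG]
    rw [ENNReal.tsum_add]
    refine add_le_add (le_trans (le_of_eq (tsum_congr fun k => ?_))
      (aux_count |u x| (abs_nonneg _) (ENNReal.ofReal (‖fderiv ℝ u x‖ ^ p x)))) ?_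
    · simp only [Set.indicator_apply, Set.mem_ofPred_eq]
    rcases lt_or_ge |u x| 1 with h | h
    · have : ∀ k : ℕ, {x | (2:ℝ) ^ k ≤ |u x|}.indicator
          (fun x => ENNReal.ofReal (((2:ℝ) ^ k) ^ (p x + s * (N * p x / (N - p x))))) x = 0 := by
        intro k
        apply Set.indicator_of_notMem
        intro hk
        have h1 : (1:ℝ) ≤ 2 ^ k := one_le_pow₀ (by norm_num)
        have h2 : (2:ℝ) ^ k ≤ |u x| := hk
        linarith
      simp only [this, tsum_zero]
      exact zero_le
    · have he0 : 0 ≤ e x := (hp0 x).le.trans (hpe x)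
      refine (le_of_eq (tsum_congr fun k => ?_)).trans
        ((aux_geom |u x| (p x + s * e x) (abs_nonneg _) ?_).trans ?_)
      · simp only [Set.indicator_apply, Set.mem_ofPred_eq, he]
      · have := (hp_bounds x).1
        have : 0 ≤ s * e x := by positivity
        linarith
      · gcongr
        rw [← ENNReal.ofReal_mul (by positivity), ← ENNReal.ofReal_mul (by positivity),
          ← ENNReal.ofReal_add (by positivity) (by positivity)]
        exact ENNReal.ofReal_le_ofReal
          (aux_absorb h hT1 hs0 (hkey x) (heP x) (hp0 x).le he0)
  have htot : I ≤ ENNReal.ofReal (2 ^ P) * 1 + ENNReal.ofReal (4 ^ P) * (K * 2 ^ N *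
      (4 * 1 + 2 * (ENNReal.ofReal (T ^ (-s)) * I + ENNReal.ofReal (T ^ (s * P)) * 1))) := by
    refine hup.trans (add_le_add (mul_le_mul_right hI2 _) (mul_le_mul_right ?_ _))
    refine (ENNReal.tsum_le_tsum hlev).trans ?_
    rw [ENNReal.tsum_mul_left]
    exact mul_le_mul_right hdown _
  -- pass to real numbers
  obtain ⟨J, hJ⟩ : ∃ J : ℝ≥0, (J : ℝ≥0∞) = I := ⟨I.toNNReal, ENNReal.coe_toNNReal hfin⟩
  rw [← hJ] at htot ⊢
  have hreal : (J : ℝ) ≤ 2 ^ P * 1 + 4 ^ P * (K * 2 ^ N *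
      (4 * 1 + 2 * (T ^ (-s) * J + T ^ (s * P) * 1))) := by
    have h := ENNReal.toReal_mono (by finiteness) htot
    rw [ENNReal.toReal_add (by finiteness) (by finiteness)] at h
    simp only [ENNReal.toReal_mul, ENNReal.toReal_pow] at h
    rw [ENNReal.toReal_add (by finiteness) (by finiteness)] at h
    simp only [ENNReal.toReal_mul] at h
    rw [ENNReal.toReal_add (by finiteness) (by finiteness)] at h
    simp only [ENNReal.toReal_mul] at h
    rw [ENNReal.toReal_ofReal (by positivity), ENNReal.toReal_ofReal (by positivity),
      ENNReal.toReal_ofReal (by positivity), ENNReal.toReal_ofReal (by positivity)] at h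
    simpa using h
  rw [ENNReal.coe_le_coe, ← NNReal.coe_le_coe, Real.coe_toNNReal _ (by positivity)]
  have hJ0 : (0:ℝ) ≤ J := J.2
  have h1 : (J:ℝ) ≤ A + (L * 2 * T ^ (-s)) * J := by
    refine hreal.trans (le_of_eq ?_)
    rw [hA, hL]; ring
  have h2 := mul_le_mul_of_nonneg_right hLT hJ0
  linarith

lemma aux_div_rpow {a M e : ℝ} (ha : 0 ≤ a) (hM : 1 ≤ M) (he : 1 ≤ e) :
    (a / M) ^ e ≤ M⁻¹ * a ^ e := by
  have hM0 : 0 < M := by linarith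
  rw [Real.div_rpow ha hM0.le, div_eq_mul_inv, mul_comm]
  gcongr
  calc M = M ^ (1:ℝ) := (Real.rpow_one M).symm
    _ ≤ M ^ e := Real.rpow_le_rpow_of_exponent_le hM he

/-- Sobolev inequality in the weighted variable exponent setting
(Proposition 2.6, stated for C¹ functions). -/
theorem weighted_variable_exponent_sobolev_inequality
    {N : ℕ} (hN : 2 ≤ N)
    (p : EuclideanSpace ℝ (Fin N) → ℝ) (hp_cont : Continuous p)
    (pm pp : ℝ) (hpm : 1 < pm) (hpp : pp < N)
    (hp_bounds : ∀ x, pm ≤ p x ∧ p x ≤ pp)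
    (C₁ : ℝ) (hC₁ : 0 < C₁)
    (hp_logHolder : ∀ x y : EuclideanSpace ℝ (Fin N),
      0 < dist x y → dist x y < 1 / 2 →
        |p x - p y| * Real.log (1 / dist x y) ≤ C₁)
    (pinf C₂ : ℝ) (hC₂ : 0 < C₂)
    (hp_decay : ∀ x : EuclideanSpace ℝ (Fin N),
      |p x - pinf| ≤ C₂ / Real.log (Real.exp 1 + ‖x‖))
    (b : EuclideanSpace ℝ (Fin N) → ℝ) (hb_meas : Measurable b)
    (B : ℝ) (hb_bdd : ∀ᵐ x ∂volume, |b x| ≤ B)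
    (b₀ : ℝ) (hb₀ : 0 < b₀) (hb_lb : ∀ᵐ x ∂volume, b₀ ≤ b x) :
    ∃ C : ℝ, 0 < C ∧
      ∀ u : EuclideanSpace ℝ (Fin N) → ℝ, ContDiff ℝ 1 u →
        Integrable (fun x => ‖gradient u x‖ ^ (p x) + b x * |u x| ^ (p x)) volume →
        luxNorm (fun x => N * p x / (N - p x)) u ≤ C * weightedSobolevNorm p b u := by
  have hN' : (2:ℝ) ≤ N := by exact_mod_cast hN
  have hN0 : (0:ℝ) < N := by linarith
  have hb1 : ∀ x, 1 ≤ p x ∧ p x ≤ pp := fun x => ⟨hpm.le.trans (hp_bounds x).1, (hp_bounds x).2⟩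
  obtain ⟨K, hK⟩ := aux_core hN p hp_cont pp hpp hb1 C₁ hC₁ hp_logHolder
  set l : ℝ := max 1 (1 / b₀) with hl
  have hl1 : 1 ≤ l := le_max_left _ _
  have hl0 : 0 < l := by linarith
  have hlb : l⁻¹ ≤ b₀ := by
    rw [inv_le_comm₀ hl0 hb₀, ← one_div]; exact le_max_right _ _
  set M : ℝ := max 1 K with hM
  have hM1 : 1 ≤ M := le_max_left _ _
  have hM0 : 0 < M := by linarith
  have hMK : (K : ℝ) ≤ M := le_max_right _ _
  have hC0 : 0 < l * M := by positivity
  refine ⟨l * M, hC0, fun u hu hint => ?_⟩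
  have hgrad : ∀ x, ‖gradient u x‖ = ‖fderiv ℝ u x‖ := fun x => by
    rw [gradient, LinearIsometryEquiv.norm_map]
  unfold luxNorm weightedSobolevNorm
  simp only [hgrad] at hint ⊢
  have hpm' := hp_cont.measurable
  have hD : Measurable fun x => ‖fderiv ℝ u x‖ :=
    (hu.continuous_fderiv one_ne_zero).norm.measurable
  have hU : Measurable fun x => |u x| := hu.continuous.abs.measurable
  have hHm : ∀ τ : ℝ, Measurable fun x =>
      (‖fderiv ℝ u x‖ / τ) ^ p x + b x * (|u x| / τ) ^ p x := fun τ =>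
    ((hD.div_const τ).pow hpm').add (hb_meas.mul ((hU.div_const τ).pow hpm'))
  have hF0 : ∀ᵐ x, 0 ≤ ‖fderiv ℝ u x‖ ^ p x + b x * |u x| ^ p x := by
    filter_upwards [hb_lb] with x hx
    have : 0 ≤ b x := hb₀.le.trans hx
    positivity
  have hH0 : ∀ τ : ℝ, 0 < τ → ∀ᵐ x, 0 ≤
      (‖fderiv ℝ u x‖ / τ) ^ p x + b x * (|u x| / τ) ^ p x := by
    intro τ hτ
    filter_upwards [hb_lb] with x hx
    have : 0 ≤ b x := hb₀.le.trans hx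
    positivity
  have hHint : ∀ τ : ℝ, 0 < τ → Integrable fun x =>
      (‖fderiv ℝ u x‖ / τ) ^ p x + b x * (|u x| / τ) ^ p x := by
    intro τ hτ
    refine (hint.const_mul ((max 1 τ⁻¹) ^ pp)).mono' (hHm τ).aestronglyMeasurable ?_
    filter_upwards [hb_lb, hH0 τ hτ] with x hx hx0
    have hbx : 0 ≤ b x := hb₀.le.trans hx
    rw [Real.norm_of_nonneg hx0]
    have hsc : ∀ a : ℝ, 0 ≤ a → (a / τ) ^ p x ≤ (max 1 τ⁻¹) ^ pp * a ^ p x := by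
      intro a ha
      rw [div_eq_mul_inv, Real.mul_rpow ha (by positivity), mul_comm]
      gcongr
      calc τ⁻¹ ^ p x ≤ (max 1 τ⁻¹) ^ p x :=
            Real.rpow_le_rpow (by positivity) (le_max_right _ _) (by linarith [(hb1 x).1])
        _ ≤ _ := Real.rpow_le_rpow_of_exponent_le (le_max_left _ _) (hb1 x).2
    calc _ ≤ (max 1 τ⁻¹) ^ pp * ‖fderiv ℝ u x‖ ^ p x + b x * ((max 1 τ⁻¹) ^ pp * |u x| ^ p x) :=
          add_le_add (hsc _ (norm_nonneg _)) (mul_le_mul_of_nonneg_left (hsc _ (abs_nonneg _)) hbx)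
      _ = _ := by ring
  have hNp : ∀ x, 0 < (N:ℝ) - p x := fun x => by linarith [(hb1 x).2]
  have he1 : ∀ x, 1 ≤ N * p x / (N - p x) := fun x => by
    rw [le_div_iff₀ (hNp x)]
    nlinarith [(hb1 x).1]
  have heP : ∀ x, N * p x / (N - p x) ≤ N * pp / (N - pp) := fun x =>
    aux_pstar_mono hN0 (hb1 x).2 hpp
  have main : ∀ τ ∈ {τ : ℝ | 0 < τ ∧
      ∫ x, ((‖fderiv ℝ u x‖ / τ) ^ (p x) + b x * (|u x| / τ) ^ (p x)) ≤ 1},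
      sInf {τ : ℝ | 0 < τ ∧ ∫ x, |u x / τ| ^ (N * p x / (N - p x)) ≤ 1} / (l * M) ≤ τ := by
    rintro τ ⟨hτ, hτ1⟩
    rw [div_le_iff₀ hC0]
    refine csInf_le ⟨0, fun z hz => hz.1.le⟩ ⟨by positivity, ?_⟩
    by_cases hi : Integrable fun x => |u x / (τ * (l * M))| ^ (N * p x / (N - p x))
    swap
    · rw [integral_undef hi]; norm_num
    have hlin : ∫⁻ x, ENNReal.ofReal
        ((‖fderiv ℝ u x‖ / τ) ^ (p x) + b x * (|u x| / τ) ^ (p x)) ≤ 1 := by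
      rw [← ofReal_integral_eq_lintegral_ofReal (hHint τ hτ) (hH0 τ hτ)]
      simpa using hτ1
    set v : EuclideanSpace ℝ (Fin N) → ℝ := fun x => (τ * l)⁻¹ * u x with hv
    have hτl : 0 < τ * l := by positivity
    have hvC : ContDiff ℝ 1 v := by rw [hv]; fun_prop
    have hvD : ∀ x, ‖fderiv ℝ v x‖ = ‖fderiv ℝ u x‖ / τ / l := by
      intro x
      rw [hv, fderiv_const_mul (hu.differentiable one_ne_zero x), norm_smul, norm_inv,
        Real.norm_of_nonneg hτl.le]
      field_simp
    have hva : ∀ x, |v x| = |u x| / τ / l := by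
      intro x
      rw [hv, abs_mul, abs_inv, abs_of_pos hτl]
      field_simp
    have hvu : ∀ x, |u x / (τ * (l * M))| = |v x| / M := by
      intro x
      rw [hva, abs_div, abs_of_pos (by positivity : 0 < τ * (l * M))]
      field_simp
    have hl1' : l⁻¹ ≤ 1 := inv_le_one_of_one_le₀ hl1
    have h1 : ∫⁻ x, ENNReal.ofReal (‖fderiv ℝ v x‖ ^ p x) ≤ 1 := by
      refine (lintegral_mono_ae ?_).trans hlin
      filter_upwards [hb_lb] with x hx
      have hbx : 0 ≤ b x := hb₀.le.trans hx
      apply ENNReal.ofReal_le_ofReal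
      rw [hvD]
      have h := aux_div_rpow (a := ‖fderiv ℝ u x‖ / τ) (by positivity) hl1 (hb1 x).1
      have h2 : 0 ≤ (‖fderiv ℝ u x‖ / τ) ^ p x := by positivity
      have h3 : 0 ≤ b x * (|u x| / τ) ^ p x := by positivity
      nlinarith
    have h2 : ∫⁻ x, ENNReal.ofReal (|v x| ^ p x) ≤ 1 := by
      refine (lintegral_mono_ae ?_).trans hlin
      filter_upwards [hb_lb] with x hx
      apply ENNReal.ofReal_le_ofReal
      rw [hva]
      have h := aux_div_rpow (a := |u x| / τ) (by positivity) hl1 (hb1 x).1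
      have h2 : 0 ≤ (‖fderiv ℝ u x‖ / τ) ^ p x := by positivity
      have h3 : 0 ≤ (|u x| / τ) ^ p x := by positivity
      nlinarith [mul_le_mul_of_nonneg_right (hlb.trans hx) h3]
    have hnn : ∀ᵐ x, 0 ≤ |u x / (τ * (l * M))| ^ (N * p x / (N - p x)) :=
      Filter.Eventually.of_forall fun x => by positivity
    have hfin : ∫⁻ x, ENNReal.ofReal (|v x| ^ (N * p x / (N - p x))) ≠ ∞ := by
      have hle : ∫⁻ x, ENNReal.ofReal (|v x| ^ (N * p x / (N - p x))) ≤
          ENNReal.ofReal (M ^ (N * pp / (N - pp))) *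
            ∫⁻ x, ENNReal.ofReal (|u x / (τ * (l * M))| ^ (N * p x / (N - p x))) := by
        rw [← lintegral_const_mul' _ _ ENNReal.ofReal_ne_top]
        apply lintegral_mono
        intro x
        beta_reduce
        rw [← ENNReal.ofReal_mul (by positivity)]
        apply ENNReal.ofReal_le_ofReal
        rw [hvu]
        calc |v x| ^ (N * p x / (N - p x)) = (M * (|v x| / M)) ^ (N * p x / (N - p x)) := by
              rw [mul_div_cancel₀ _ hM0.ne']
          _ = M ^ (N * p x / (N - p x)) * (|v x| / M) ^ (N * p x / (N - p x)) :=
              Real.mul_rpow hM0.le (by positivity)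
          _ ≤ _ := mul_le_mul_of_nonneg_right
              (Real.rpow_le_rpow_of_exponent_le hM1 (heP x)) (by positivity)
      refine ne_top_of_le_ne_top (ENNReal.mul_ne_top ENNReal.ofReal_ne_top ?_) hle
      rw [← ofReal_integral_eq_lintegral_ofReal hi hnn]
      exact ENNReal.ofReal_ne_top
    have h3 := hK v hvC h1 h2 hfin
    have h4 : ∫⁻ x, ENNReal.ofReal (|u x / (τ * (l * M))| ^ (N * p x / (N - p x))) ≤ 1 := by
      calc _ ≤ ∫⁻ x, ENNReal.ofReal M⁻¹ * ENNReal.ofReal (|v x| ^ (N * p x / (N - p x))) := by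
            apply lintegral_mono
            intro x
            beta_reduce
            rw [← ENNReal.ofReal_mul (by positivity)]
            apply ENNReal.ofReal_le_ofReal
            rw [hvu]
            exact aux_div_rpow (abs_nonneg _) hM1 (he1 x)
        _ = ENNReal.ofReal M⁻¹ * ∫⁻ x, ENNReal.ofReal (|v x| ^ (N * p x / (N - p x))) :=
            lintegral_const_mul' _ _ ENNReal.ofReal_ne_top
        _ ≤ ENNReal.ofReal M⁻¹ * ENNReal.ofReal M := by
            gcongr
            refine h3.trans ?_
            rw [← ENNReal.ofReal_coe_nnreal]
            exact ENNReal.ofReal_le_ofReal hMK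
        _ = 1 := by
            rw [← ENNReal.ofReal_mul (by positivity), inv_mul_cancel₀ hM0.ne', ENNReal.ofReal_one]
    rw [← ofReal_integral_eq_lintegral_ofReal hi hnn] at h4
    simpa using h4
  have hne : {τ : ℝ | 0 < τ ∧
      ∫ x, ((‖fderiv ℝ u x‖ / τ) ^ (p x) + b x * (|u x| / τ) ^ (p x)) ≤ 1}.Nonempty := by
    have hI0 : 0 ≤ ∫ x, (‖fderiv ℝ u x‖ ^ p x + b x * |u x| ^ p x) := integral_nonneg_of_ae hF0
    set I : ℝ := ∫ x, (‖fderiv ℝ u x‖ ^ p x + b x * |u x| ^ p x) with hI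
    refine ⟨1 + I, by linarith, ?_⟩
    have hτ : 0 < 1 + I := by linarith
    calc _ ≤ ∫ x, (1 + I)⁻¹ * (‖fderiv ℝ u x‖ ^ p x + b x * |u x| ^ p x) := by
          apply integral_mono_ae (hHint _ hτ) (hint.const_mul _)
          filter_upwards [hb_lb] with x hx
          have hbx : 0 ≤ b x := hb₀.le.trans hx
          have h1 := aux_div_rpow (norm_nonneg (fderiv ℝ u x)) (by linarith : 1 ≤ 1 + I) (hb1 x).1
          have h2 := aux_div_rpow (abs_nonneg (u x)) (by linarith : 1 ≤ 1 + I) (hb1 x).1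
          have h3 := mul_le_mul_of_nonneg_left h2 hbx
          linarith
      _ = (1 + I)⁻¹ * I := by rw [integral_const_mul]
      _ ≤ 1 := by
          rw [inv_mul_le_iff₀ hτ]; linarith
  have := le_csInf hne main
  rwa [div_le_iff₀' hC0] at this
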